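/- For general points: ℓ(L(3e+6, 3e−3, 6^{2e})) = 27 − 12e for 1 ≤ e ≤ 2 (virtual dimension −12e + 24); ℓ(L(3e+7, 3e−2, 6^{2e})) = 35 − 12e for 1 ≤ e ≤ 2 (virtual dimension −12e + 34); ℓ(L(9, 0, 6^3)) = 0 (virtual dimension −9); ℓ(L(10, 1, 6^3)) = 4 (virtual dimension 1); ℓ(L(14, 5, 6^5)) = 0 (virtual dimension −1); and ℓ(L(18, 9, 6^7)) = 0 (virtual dimension −3); in particular all these systems are special. -/

import Mathlib

open MvPolynomial

/-- The iterated partial derivative corresponding to the multi-index `ν`. -/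
noncomputable def mderiv (ν : Fin 3 → ℕ) :
    MvPolynomial (Fin 3) ℂ →ₗ[ℂ] MvPolynomial (Fin 3) ℂ :=
  ((pderiv (R := ℂ) (0 : Fin 3)).toLinearMap ^ ν 0) ∘ₗ
  ((pderiv (R := ℂ) (1 : Fin 3)).toLinearMap ^ ν 1) ∘ₗ
  ((pderiv (R := ℂ) (2 : Fin 3)).toLinearMap ^ ν 2)

/-- The linear system `L(d; m)` of homogeneous forms of degree `d` in three variables
all of whose partial derivatives of order `< m i` vanish at the point `p i`,
i.e. plane curves of degree `d` with multiplicity at least `m i` at `p i`. -/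
noncomputable def linSys {k : ℕ} (p : Fin k → Fin 3 → ℂ) (d : ℕ) (m : Fin k → ℕ) :
    Submodule ℂ (MvPolynomial (Fin 3) ℂ) :=
  (homogeneousSubmodule (Fin 3) ℂ d) ⊓
    ⨅ (i : Fin k), ⨅ (ν : Fin 3 → ℕ), ⨅ (_ : ν 0 + ν 1 + ν 2 < m i),
      LinearMap.ker ((aeval (p i)).toLinearMap ∘ₗ mderiv ν)

/-- The projective dimension `ℓ` of the linear system (`-1` means empty). -/
noncomputable def projDim {k : ℕ} (p : Fin k → Fin 3 → ℂ) (d : ℕ) (m : Fin k → ℕ) : ℤ :=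
  (Module.finrank ℂ (linSys p d m) : ℤ) - 1

/-- The virtual dimension `v = d(d+3)/2 - ∑ mᵢ(mᵢ+1)/2`. -/
def virtDim {k : ℕ} (d : ℕ) (m : Fin k → ℕ) : ℤ :=
  ((d : ℤ) * (d + 3)) / 2 - ∑ i : Fin k, ((m i : ℤ) * (m i + 1)) / 2

/-- The quasi-homogeneous multiplicity vector `(m₀, 6, …, 6)` on `n + 1` points. -/
def qh (n m0 : ℕ) : Fin (n + 1) → ℕ := fun i => if i = 0 then m0 else 6

/-- A property `Q` of configurations of `k` points of `ℙ²` (given by nonzero homogeneous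
coordinate vectors) holds for points in general position: there is a nonzero polynomial
in the coordinates such that `Q` holds whenever it does not vanish. -/
def Generically (k : ℕ) (Q : (Fin k → Fin 3 → ℂ) → Prop) : Prop :=
  ∃ P : MvPolynomial (Fin k × Fin 3) ℂ, P ≠ 0 ∧
    ∀ p : Fin k → Fin 3 → ℂ, (∀ i, p i ≠ 0) →
      eval (fun x => p x.1 x.2) P ≠ 0 → Q p

/-!
Each of these systems is special because it contains a multiple fixed part: `a` times a curve `F` of
`L(d₁; m₁)`, which exists for numerical reasons. Adding `a F` to the curves of a residual system
`L(d₂; m₂)`, which is not special, gives the lower bound, valid for all configurations of points.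

For the upper bound, the dimension is upper semicontinuous in the points, so it suffices to treat
one rational configuration. There, a system of degree `d` is restricted to a curve `C` of degree
`e ≤ d`: the kernel of the restriction is the residual system of degree `d - e`, and the image
consists of polynomials of degree at most `d e` in the parameter of `C` with prescribed zeros at the
base points. Every curve used is projectively equivalent to `x₀ ^ (k + 1) = x₁ ^ k x₂`, a line, a
conic or a cuspidal cubic, which has the parametrization `t ↦ (t ^ k, t ^ (k + 1), 1)`.
-/

open scoped Matrix

section Multiplicity

variable {σ R : Type*} [CommSemiring R]

/-- The substitution `x ↦ p + x`, which sends a polynomial to its Taylor expansion at `p`. -/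
noncomputable def taylorShift (p : σ → R) : MvPolynomial σ R →ₐ[R] MvPolynomial σ R :=
  aeval fun i => C (p i) + X i

/-- The multiplicity of `f` at the point `p`: the order of the Taylor expansion of `f` at `p`, so
that the zero polynomial has multiplicity `⊤`. -/
noncomputable def multAt (p : σ → R) (f : MvPolynomial σ R) : ℕ∞ :=
  (taylorShift p f : MvPowerSeries σ R).order

@[simp]
lemma taylorShift_X (p : σ → R) (i : σ) : taylorShift p (X i) = C (p i) + X i :=
  aeval_X _ _

lemma coeff_zero_taylorShift (p : σ → R) (f : MvPolynomial σ R) :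
    coeff 0 (taylorShift p f) = eval p f := by
  have h : constantCoeff.comp (taylorShift p).toRingHom = eval p :=
    MvPolynomial.ringHom_ext (by simp [taylorShift]) (by simp [taylorShift])
  exact DFunLike.congr_fun h f

lemma pderiv_taylorShift (p : σ → R) (i : σ) (f : MvPolynomial σ R) :
    pderiv i (taylorShift p f) = taylorShift p (pderiv i f) := by
  induction f using MvPolynomial.induction_on with
  | C a => simp [taylorShift]
  | add f g hf hg => rw [map_add, map_add, hf, hg, map_add, map_add]
  | mul_X f j hf =>
    obtain rfl | hij := eq_or_ne j i
    · simp [hf]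
    · simp [hf, pderiv_X_of_ne hij]

lemma natCast_le_multAt_iff {p : σ → R} {m : ℕ} {f : MvPolynomial σ R} :
    (m : ℕ∞) ≤ multAt p f ↔ ∀ ν : σ →₀ ℕ, ν.degree < m → coeff ν (taylorShift p f) = 0 := by
  refine ⟨fun h ν hν => ?_, fun h => MvPowerSeries.nat_le_order fun ν hν => ?_⟩
  · rw [← coeff_coe]
    exact MvPowerSeries.coeff_of_lt_order (lt_of_lt_of_le (Nat.cast_lt.mpr hν) h)
  · rw [coeff_coe, h ν hν]

lemma natCast_le_multAt_iff_mem_pow {p : σ → R} {m : ℕ} {f : MvPolynomial σ R} :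
    (m : ℕ∞) ≤ multAt p f ↔ taylorShift p f ∈ idealOfVars σ R ^ m := by
  rw [natCast_le_multAt_iff, mem_pow_idealOfVars_iff']

lemma pow_dvd_aeval_of_le_multAt {A : Type*} [CommSemiring A] [Algebra R A] {p : σ → R} {m : ℕ}
    {f : MvPolynomial σ R} (hf : m ≤ multAt p f) (s : A) (η : σ → A) :
    s ^ m ∣ aeval (fun i => algebraMap R A (p i) + s * η i) f := by
  have hcomp : (aeval fun i => s * η i).comp (taylorShift p) =
      aeval (R := R) fun i => algebraMap R A (p i) + s * η i := by
    ext i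
    simp
  have hle : (idealOfVars σ R).map (aeval (R := R) fun i => s * η i) ≤ Ideal.span {s} := by
    rw [idealOfVars, Ideal.map_span, Ideal.span_le]
    rintro _ ⟨_, ⟨i, rfl⟩, rfl⟩
    rw [aeval_X, SetLike.mem_coe, Ideal.mem_span_singleton]
    exact dvd_mul_right _ _
  rw [← hcomp, AlgHom.comp_apply, ← Ideal.mem_span_singleton, ← Ideal.span_singleton_pow]
  refine Ideal.pow_right_mono hle m ?_
  rw [← Ideal.map_pow]
  exact Ideal.mem_map_of_mem _ (natCast_le_multAt_iff_mem_pow.mp hf)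

lemma multAt_mul [NoZeroDivisors R] [Nontrivial R] (p : σ → R) (f g : MvPolynomial σ R) :
    multAt p (f * g) = multAt p f + multAt p g := by
  rw [multAt, map_mul, coe_mul, MvPowerSeries.order_mul, multAt, multAt]

lemma natCast_le_multAt_pow_mul {p : σ → R} {f g : MvPolynomial σ R} {a m₁ m₂ : ℕ}
    (hf : m₁ ≤ multAt p f) (hg : m₂ ≤ multAt p g) :
    ((a * m₁ + m₂ : ℕ) : ℕ∞) ≤ multAt p (f ^ a * g) := by
  rw [natCast_le_multAt_iff_mem_pow] at hf hg ⊢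
  rw [map_mul, map_pow, pow_add, mul_comm a, pow_mul]
  exact Ideal.mul_mem_mul (Ideal.pow_mem_pow hf a) hg

end Multiplicity

section LinearSystem

lemma coeff_iterate_pderiv {σ R : Type*} [CommSemiring R] (i : σ) (n : ℕ) (u : σ →₀ ℕ)
    (f : MvPolynomial σ R) :
    coeff u ((pderiv i)^[n] f) =
      coeff (u + Finsupp.single i n) f * (u i + 1).ascFactorial n := by
  induction n generalizing f with
  | zero => simp
  | succ n ih =>
    rw [Function.iterate_succ_apply, ih, coeff_pderiv, Nat.ascFactorial_succ, add_assoc u,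
      ← Finsupp.single_add]
    simp
    ring

lemma mderiv_apply (ν : Fin 3 → ℕ) (f : MvPolynomial (Fin 3) ℂ) :
    mderiv ν f = (pderiv 0)^[ν 0] ((pderiv 1)^[ν 1] ((pderiv 2)^[ν 2] f)) := by
  simp [mderiv, Module.End.pow_apply]

lemma mderiv_taylorShift (p : Fin 3 → ℂ) (ν : Fin 3 → ℕ) (f : MvPolynomial (Fin 3) ℂ) :
    mderiv ν (taylorShift p f) = taylorShift p (mderiv ν f) := by
  have h (i : Fin 3) (n : ℕ) : Function.Semiconj (taylorShift p) (pderiv i)^[n] (pderiv i)^[n] :=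
    Function.Semiconj.iterate_right (fun f => (pderiv_taylorShift p i f).symm) n
  simp only [mderiv_apply, (h _ _).eq]

lemma coeff_zero_mderiv_eq_zero_iff (ν : Fin 3 →₀ ℕ) (f : MvPolynomial (Fin 3) ℂ) :
    coeff 0 (mderiv ν f) = 0 ↔ coeff ν f = 0 := by
  have hν : Finsupp.single 0 (ν 0) + Finsupp.single 1 (ν 1) + Finsupp.single 2 (ν 2) = ν := by
    ext i
    fin_cases i <;> simp
  simp [mderiv_apply, coeff_iterate_pderiv, hν, Nat.factorial_ne_zero]

lemma natCast_le_multAt_iff_eval_mderiv {p : Fin 3 → ℂ} {m : ℕ} {f : MvPolynomial (Fin 3) ℂ} :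
    (m : ℕ∞) ≤ multAt p f ↔ ∀ ν : Fin 3 →₀ ℕ, ν.degree < m → eval p (mderiv ν f) = 0 := by
  simp only [natCast_le_multAt_iff, ← coeff_zero_taylorShift, ← mderiv_taylorShift,
    coeff_zero_mderiv_eq_zero_iff]

variable {k : ℕ}

lemma mem_linSys {p : Fin k → Fin 3 → ℂ} {d : ℕ} {m : Fin k → ℕ}
    {f : MvPolynomial (Fin 3) ℂ} :
    f ∈ linSys p d m ↔ f.IsHomogeneous d ∧ ∀ i, m i ≤ multAt (p i) f := by
  simp only [linSys, Submodule.mem_inf, Submodule.mem_iInf, natCast_le_multAt_iff_eval_mderiv,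
    Finsupp.degree_eq_sum, Fin.sum_univ_three, Finsupp.equivFunOnFinite.forall_congr_left]
  rfl

end LinearSystem

section LinearSubstitution

variable {σ R : Type*} [Fintype σ] [CommSemiring R]

/-- The pullback of polynomials under the linear map with matrix `M`. -/
noncomputable def linSubst (M : Matrix σ σ R) : MvPolynomial σ R →ₐ[R] MvPolynomial σ R :=
  bind₁ M.toMvPolynomial

lemma linSubst_linSubst (M N : Matrix σ σ R) (f : MvPolynomial σ R) :
    linSubst N (linSubst M f) = linSubst (M * N) f := by
  simp only [linSubst, bind₁_bind₁, ← Matrix.toMvPolynomial_mul]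

lemma linSubst_one [DecidableEq σ] : linSubst (1 : Matrix σ σ R) = AlgHom.id R _ := by
  rw [linSubst, Matrix.toMvPolynomial_one, bind₁_X_left]

lemma isHomogeneous_linSubst (M : Matrix σ σ R) {f : MvPolynomial σ R} {d : ℕ}
    (hf : f.IsHomogeneous d) : (linSubst M f).IsHomogeneous d := by
  have := hf.aeval _ M.toMvPolynomial_isHomogeneous
  rwa [one_mul] at this

lemma taylorShift_linSubst (M : Matrix σ σ R) (p : σ → R) (f : MvPolynomial σ R) :
    taylorShift p (linSubst M f) = linSubst M (taylorShift (M *ᵥ p) f) := by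
  suffices h : (taylorShift p).comp (linSubst M) = (linSubst M).comp (taylorShift (M *ᵥ p)) from
    DFunLike.congr_fun h f
  ext i
  simp [linSubst, Matrix.toMvPolynomial, ← C_mul_X_eq_monomial, Matrix.mulVec, dotProduct,
    mul_add, Finset.sum_add_distrib]

lemma multAt_mulVec_le_multAt_linSubst (M : Matrix σ σ R) (p : σ → R) (f : MvPolynomial σ R) :
    multAt (M *ᵥ p) f ≤ multAt p (linSubst M f) := by
  have hle : (idealOfVars σ R).map (linSubst M) ≤ idealOfVars σ R := by
    rw [idealOfVars, Ideal.map_span, Ideal.span_le]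
    rintro _ ⟨_, ⟨i, rfl⟩, rfl⟩
    rw [linSubst, bind₁_X_right]
    exact Ideal.sum_mem _ fun j _ => by
      rw [← C_mul_X_eq_monomial]
      exact Ideal.mul_mem_left _ _ (Ideal.subset_span ⟨j, rfl⟩)
  refine ENat.forall_natCast_le_iff_le.mp fun m hm => ?_
  rw [natCast_le_multAt_iff_mem_pow] at hm ⊢
  rw [taylorShift_linSubst]
  refine Ideal.pow_right_mono hle m ?_
  rw [← Ideal.map_pow]
  exact Ideal.mem_map_of_mem _ hm

end LinearSubstitution

section ProjectiveInvariance

variable {k : ℕ}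

lemma linSys_le (p : Fin k → Fin 3 → ℂ) (d : ℕ) (m : Fin k → ℕ) :
    linSys p d m ≤ homogeneousSubmodule (Fin 3) ℂ d :=
  inf_le_left

instance (d : ℕ) : FiniteDimensional ℂ (homogeneousSubmodule (Fin 3) ℂ d) :=
  Module.Finite.iff_fg.mpr (homogeneousSubmodule_fg (Fin 3) ℂ d)

instance (p : Fin k → Fin 3 → ℂ) (d : ℕ) (m : Fin k → ℕ) : FiniteDimensional ℂ (linSys p d m) :=
  Submodule.finiteDimensional_of_le (linSys_le p d m)

lemma finrank_linSys_mulVec_le {A B : Matrix (Fin 3) (Fin 3) ℂ} (h : B * A = 1)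
    (p : Fin k → Fin 3 → ℂ) (d : ℕ) (m : Fin k → ℕ) :
    Module.finrank ℂ (linSys (fun i => B *ᵥ p i) d m) ≤ Module.finrank ℂ (linSys p d m) := by
  have hinj : Function.Injective (linSubst B) :=
    Function.LeftInverse.injective (g := linSubst A) fun f => by
      rw [linSubst_linSubst, h, linSubst_one, AlgHom.id_apply]
  rw [((linSys (fun i => B *ᵥ p i) d m).equivMapOfInjective (linSubst B).toLinearMap
    hinj).finrank_eq]
  refine Submodule.finrank_mono ?_
  rintro _ ⟨f, hf, rfl⟩
  obtain ⟨hhom, hmult⟩ := mem_linSys.mp hf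
  exact mem_linSys.mpr ⟨isHomogeneous_linSubst B hhom,
    fun i => (hmult i).trans (multAt_mulVec_le_multAt_linSubst B _ f)⟩

lemma finrank_linSys_mulVec {B : Matrix (Fin 3) (Fin 3) ℂ} (hB : B.det ≠ 0)
    (p : Fin k → Fin 3 → ℂ) (d : ℕ) (m : Fin k → ℕ) :
    Module.finrank ℂ (linSys (fun i => B *ᵥ p i) d m) = Module.finrank ℂ (linSys p d m) := by
  have hBA : B * B⁻¹ = 1 := Matrix.mul_nonsing_inv _ hB.isUnit
  have hAB : B⁻¹ * B = 1 := Matrix.nonsing_inv_mul _ hB.isUnit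
  have hp : (fun i => B⁻¹ *ᵥ B *ᵥ p i) = p := by simp [Matrix.mulVec_mulVec, hAB]
  refine (finrank_linSys_mulVec_le hBA p d m).antisymm ?_
  have h := finrank_linSys_mulVec_le hAB (fun i => B *ᵥ p i) d m
  rwa [hp] at h

end ProjectiveInvariance

section LowerBound

section Homogeneous

variable {σ R : Type*} [CommSemiring R]

lemma finrank_homogeneousSubmodule [Fintype σ] [StrongRankCondition R] (d : ℕ) :
    Module.finrank R (homogeneousSubmodule σ R d) = (Fintype.card σ + d - 1).choose d := by
  classical
  have hs : {ν : σ →₀ ℕ | ν.degree = d} = ↑((Finset.univ : Finset σ).finsuppAntidiag d) := by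
    ext ν
    simp [Finset.mem_finsuppAntidiag, Finsupp.degree_eq_sum]
  have h : homogeneousSubmodule σ R d = restrictSupport R {ν : σ →₀ ℕ | ν.degree = d} :=
    homogeneousSubmodule_eq_finsupp_supported _ _ _
  rw [h, Module.finrank_eq_nat_card_basis (basisRestrictSupport R _), hs, Nat.card_coe_set_eq,
    Set.ncard_coe_finset, Finset.card_finsuppAntidiag_nat_eq_choose, Finset.card_univ]

lemma coeff_X_mul_pderiv (i : σ) (u : σ →₀ ℕ) (f : MvPolynomial σ R) :
    coeff u (X i * pderiv i f) = u i * coeff u f := by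
  classical
  induction f using MvPolynomial.induction_on' with
  | monomial v a =>
    rw [X_mul_pderiv_monomial, coeff_smul, nsmul_eq_mul, coeff_monomial]
    split_ifs with h
    · rw [h]
    · simp
  | add f g hf hg => rw [map_add, mul_add, coeff_add, coeff_add, hf, hg, mul_add]

/-- Euler's identity for the Taylor coefficients of a form. -/
lemma sum_mul_coeff_taylorShift_add [Fintype σ] {f : MvPolynomial σ R} {d : ℕ}
    (hf : f.IsHomogeneous d) (p : σ → R) (u : σ →₀ ℕ) :
    ∑ i, p i * (coeff (u + Finsupp.single i 1) (taylorShift p f) * (u i + 1)) +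
      u.degree * coeff u (taylorShift p f) = d * coeff u (taylorShift p f) := by
  have h := congrArg (fun g => coeff u (taylorShift p g)) hf.sum_X_mul_pderiv
  rw [map_sum, map_nsmul, coeff_smul, nsmul_eq_mul, coeff_sum] at h
  simpa only [map_mul, taylorShift_X, ← pderiv_taylorShift, add_mul, coeff_add, coeff_C_mul,
    coeff_X_mul_pderiv, coeff_pderiv, Finset.sum_add_distrib, ← Finset.sum_mul, ← Nat.cast_sum,
    ← Finsupp.degree_eq_sum] using h

/-- Where the `j`-th coordinate does not vanish, Euler's identity determines the Taylor
coefficients of a form from those in the other directions. -/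
lemma natCast_le_multAt_of_coeff_taylorShift [Finite σ] [NoZeroDivisors R] [CharZero R]
    {f : MvPolynomial σ R} {d : ℕ} (hf : f.IsHomogeneous d) {p : σ → R} {m : ℕ} {j : σ}
    (hj : p j ≠ 0)
    (h : ∀ ν : σ →₀ ℕ, ν j = 0 → ν.degree < m → coeff ν (taylorShift p f) = 0) :
    m ≤ multAt p f := by
  have := Fintype.ofFinite σ
  rw [natCast_le_multAt_iff]
  suffices H : ∀ n, ∀ ν : σ →₀ ℕ, ν j = n → ν.degree < m → coeff ν (taylorShift p f) = 0 from
    fun ν => H _ ν rfl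
  intro n
  induction n with
  | zero => exact h
  | succ n ih =>
    intro ν hν hm
    obtain ⟨u, rfl⟩ : ∃ u : σ →₀ ℕ, ν = u + Finsupp.single j 1 :=
      ⟨ν - Finsupp.single j 1, (tsub_add_cancel_of_le (by simp [hν])).symm⟩
    rw [map_add, Finsupp.degree_single] at hm
    have hu : u j = n := by simpa using hν
    have hother (i : σ) (hij : i ≠ j) : coeff (u + Finsupp.single i 1) (taylorShift p f) = 0 :=
      ih _ (by simp [hij, hu]) (by rwa [map_add, Finsupp.degree_single])
    have euler := sum_mul_coeff_taylorShift_add hf p u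
    rw [ih u hu (by omega), Finset.sum_eq_single_of_mem j (Finset.mem_univ j)
      fun i _ hij => by rw [hother i hij, zero_mul, mul_zero]] at euler
    have hu1 : (u j : R) + 1 ≠ 0 := by exact_mod_cast (u j).succ_ne_zero
    simpa [hj, hu1] using euler

end Homogeneous

lemma sum_range_succ_eq_choose_two (m : ℕ) : ∑ n ∈ Finset.range m, (n + 1) = (m + 1).choose 2 := by
  induction m with
  | zero => rfl
  | succ m ih => rw [Finset.sum_range_succ, ih, Nat.choose_succ_succ' (m + 1), Nat.choose_one_right,
      add_comm]

variable {k : ℕ} {p : Fin k → Fin 3 → ℂ}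

/-- The conditions imposed by a point with `p i j ≠ 0` are the vanishing of the
`1 + 2 + ⋯ + m i` Taylor coefficients of order `< m i` in the two other directions. -/
theorem choose_two_le_finrank_linSys_add (hp : ∀ i, p i ≠ 0) (d : ℕ) (m : Fin k → ℕ) :
    (d + 2).choose 2 ≤ Module.finrank ℂ (linSys p d m) + ∑ i, (m i + 1).choose 2 := by
  choose j hj using fun i => Function.ne_iff.mp (hp i)
  let Φ : homogeneousSubmodule (Fin 3) ℂ d →ₗ[ℂ]
      ((i : Fin k) × (n : Fin (m i)) × (({j i}ᶜ : Finset (Fin 3)).finsuppAntidiag n.val)) → ℂ :=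
    LinearMap.pi fun x => lcoeff ℂ x.2.2.val ∘ₗ (taylorShift (p x.1)).toLinearMap ∘ₗ
      (homogeneousSubmodule (Fin 3) ℂ d).subtype
  have hker : (LinearMap.ker Φ).map (homogeneousSubmodule (Fin 3) ℂ d).subtype ≤ linSys p d m := by
    rintro _ ⟨⟨f, hf⟩, hΦ, rfl⟩
    refine mem_linSys.mpr ⟨hf, fun i =>
      natCast_le_multAt_of_coeff_taylorShift hf (hj i) fun ν hν hm => ?_⟩
    refine congrFun hΦ ⟨i, ⟨ν.degree, hm⟩, ν, ?_⟩
    rw [Finset.mem_finsuppAntidiag', Finset.subset_compl_singleton, Finsupp.notMem_support_iff]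
    exact ⟨rfl, hν⟩
  have hrange := Submodule.finrank_le (LinearMap.range Φ)
  have hrank := LinearMap.finrank_range_add_finrank_ker Φ
  have hle := Submodule.finrank_mono hker
  have hcard (i : Fin k) : ∑ n : Fin (m i), Fintype.card
      (({j i}ᶜ : Finset (Fin 3)).finsuppAntidiag n.val) = (m i + 1).choose 2 := by
    rw [← sum_range_succ_eq_choose_two, ← Fin.sum_univ_eq_sum_range (fun n => n + 1)]
    refine Finset.sum_congr rfl fun n _ => ?_
    rw [Fintype.card_coe, Finset.card_finsuppAntidiag_nat_eq_choose, Finset.card_compl,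
      Finset.card_singleton, Fintype.card_fin, show 3 - 1 + n.val - 1 = n.val + 1 by omega,
      Nat.choose_symm_add, Nat.choose_one_right]
  rw [Submodule.finrank_map_subtype_eq] at hle
  simp only [Module.finrank_fintype_fun_eq_card, Fintype.card_sigma, hcard] at hrange
  have hchoose : (3 + d - 1).choose d = (d + 2).choose 2 := by
    rw [show 3 + d - 1 = d + 2 by omega, Nat.choose_symm_add]
  rw [finrank_homogeneousSubmodule, Fintype.card_fin, hchoose] at hrank
  omega

lemma virtDim_eq (d : ℕ) (m : Fin k → ℕ) :
    virtDim d m = (d + 2).choose 2 - ∑ i, ((m i + 1).choose 2 : ℤ) - 1 := by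
  have h (n : ℕ) : ((n + 1).choose 2 : ℤ) = n * (n + 1) / 2 := by
    rw [Nat.choose_two_right, Nat.add_sub_cancel, mul_comm]
    push_cast
    rfl
  have hd : ((d + 1 : ℕ) : ℤ) * ((d + 1 : ℕ) + 1) / 2 = d * (d + 3) / 2 + 1 := by
    rw [← Int.add_mul_ediv_right _ _ two_ne_zero]
    congr 1
    push_cast
    ring
  simp only [virtDim, h, hd]
  ring

theorem virtDim_le_projDim (hp : ∀ i, p i ≠ 0) (d : ℕ) (m : Fin k → ℕ) :
    virtDim d m ≤ projDim p d m := by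
  have := choose_two_le_finrank_linSys_add hp d m
  rw [virtDim_eq, projDim]
  zify at this
  linarith

lemma projDim_le_of_pow_mul {a d₁ d₂ d : ℕ}
    {m₁ m₂ m : Fin k → ℕ} {F : MvPolynomial (Fin 3) ℂ} (hF : F ∈ linSys p d₁ m₁) (hF0 : F ≠ 0)
    (hd : a * d₁ + d₂ = d) (hm : ∀ i, m i ≤ a * m₁ i + m₂ i) :
    projDim p d₂ m₂ ≤ projDim p d m := by
  rw [projDim, projDim, sub_le_sub_iff_right, Nat.cast_le,
    ((linSys p d₂ m₂).equivMapOfInjective (LinearMap.mulLeft ℂ (F ^ a))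
    (mul_right_injective₀ (pow_ne_zero a hF0))).finrank_eq]
  refine Submodule.finrank_mono ?_
  rintro _ ⟨g, hg, rfl⟩
  rw [SetLike.mem_coe, mem_linSys] at hg
  rw [mem_linSys] at hF
  refine mem_linSys.mpr ⟨?_, fun i => (Nat.cast_le.mpr (hm i)).trans
    (natCast_le_multAt_pow_mul (hF.2 i) (hg.2 i))⟩
  rw [← hd, mul_comm a]
  exact (hF.1.pow a).mul hg.1

theorem virtDim_le_projDim_of_fixed_part (hp : ∀ i, p i ≠ 0) {a d₁ d₂ d : ℕ} {m₁ m₂ m : Fin k → ℕ}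
    (h₁ : 0 ≤ virtDim d₁ m₁) (hd : a * d₁ + d₂ = d) (hm : ∀ i, m i ≤ a * m₁ i + m₂ i) :
    virtDim d₂ m₂ ≤ projDim p d m := by
  obtain ⟨⟨F, hF⟩, hF0⟩ : ∃ F : linSys p d₁ m₁, F ≠ 0 := by
    rw [← Module.finrank_pos_iff_exists_ne_zero (R := ℂ)]
    have := h₁.trans (virtDim_le_projDim hp d₁ m₁)
    rw [projDim] at this
    omega
  exact (virtDim_le_projDim hp d₂ m₂).trans
    (projDim_le_of_pow_mul hF (fun h => hF0 (Subtype.ext h)) hd hm)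

end LowerBound

section Semicontinuity

/-- The polynomial `P` is a minor of maximal rank at `x₀`: the conditions at `x` are independent on
a complement of the solution space at `x₀` as soon as `P` does not vanish at `x`. -/
theorem exists_ne_zero_forall_finrank_ker_le {K σ κ V : Type*} [Field K] [Finite κ]
    [AddCommGroup V] [Module K V] [FiniteDimensional K V] (φ : κ → V →ₗ[K] MvPolynomial σ K)
    (x₀ : σ → K) :
    ∃ P : MvPolynomial σ K, P ≠ 0 ∧ ∀ x, eval x P ≠ 0 →
      Module.finrank K (LinearMap.ker (LinearMap.pi fun a => (aeval x).toLinearMap ∘ₗ φ a)) ≤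
        Module.finrank K
          (LinearMap.ker (LinearMap.pi fun a => (aeval x₀).toLinearMap ∘ₗ φ a)) := by
  classical
  have := Fintype.ofFinite κ
  let L (x : σ → K) : V →ₗ[K] κ → K := LinearMap.pi fun a => (aeval x).toLinearMap ∘ₗ φ a
  obtain ⟨U, hU⟩ := Submodule.exists_isCompl (LinearMap.ker (L x₀))
  have hinj : LinearMap.ker (L x₀ ∘ₗ U.subtype) = ⊥ := by
    rw [LinearMap.ker_comp, ← Submodule.disjoint_iff_comap_eq_bot]
    exact hU.disjoint.symm
  obtain ⟨G, hG⟩ := LinearMap.exists_leftInverse_of_injective _ hinj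
  let u := Module.finBasis K U
  let P : MvPolynomial σ K := Matrix.det <| .of fun b c =>
    ∑ a, φ a (u c) * C (u.repr (G fun e => if a = e then 1 else 0) b)
  have hP (x : σ → K) : eval x P = LinearMap.det (G ∘ₗ L x ∘ₗ U.subtype) := by
    rw [← LinearMap.det_toMatrix u, RingHom.map_det]
    congr 1
    ext b c
    rw [LinearMap.toMatrix_apply, LinearMap.comp_apply, LinearMap.pi_apply_eq_sum_univ G]
    simp [L, aeval_eq_eval]
  refine ⟨P, fun h => ?_, fun x hx => ?_⟩
  · have h₀ := hP x₀
    rw [hG, LinearMap.det_id, h, map_zero] at h₀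
    exact zero_ne_one h₀
  · rw [hP] at hx
    have hdisj : Disjoint (LinearMap.ker (L x)) U := by
      rw [disjoint_comm, Submodule.disjoint_iff_comap_eq_bot, ← LinearMap.ker_comp, eq_bot_iff]
      exact (LinearMap.ker_le_ker_comp _ G).trans
        (LinearMap.ker_eq_bot.mpr (LinearMap.equivOfDetNeZero _ hx).injective).le
    have hle := Submodule.finrank_add_finrank_le_of_disjoint hdisj
    have hdim := Submodule.finrank_add_eq_of_isCompl hU
    change Module.finrank K (LinearMap.ker (L x)) ≤ Module.finrank K (LinearMap.ker (L x₀))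
    omega

variable {k : ℕ}

theorem generically_finrank_linSys_le (p₀ : Fin k → Fin 3 → ℂ) (d : ℕ) (m : Fin k → ℕ) :
    Generically k fun p =>
      Module.finrank ℂ (linSys p d m) ≤ Module.finrank ℂ (linSys p₀ d m) := by
  have (i : Fin k) : Finite {ν : Fin 3 →₀ ℕ // ν.degree < m i} :=
    (Finsupp.finite_of_degree_lt (m i)).to_subtype
  let φ (a : (i : Fin k) × {ν : Fin 3 →₀ ℕ // ν.degree < m i}) :
      homogeneousSubmodule (Fin 3) ℂ d →ₗ[ℂ] MvPolynomial (Fin k × Fin 3) ℂ :=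
    (rename fun j => (a.1, j)).toLinearMap ∘ₗ mderiv a.2.val ∘ₗ
      (homogeneousSubmodule (Fin 3) ℂ d).subtype
  have hφ (p : Fin k → Fin 3 → ℂ) :
      LinearMap.ker (LinearMap.pi fun a => (aeval fun x => p x.1 x.2).toLinearMap ∘ₗ φ a) =
        (linSys p d m).comap (homogeneousSubmodule (Fin 3) ℂ d).subtype := by
    ext f
    have heval (i : Fin k) (g : MvPolynomial (Fin 3) ℂ) :
        eval (fun x => p x.1 x.2) (rename (fun j => (i, j)) g) = eval (p i) g := by
      rw [eval_rename]
      rfl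
    have hf : f.val.IsHomogeneous d := f.2
    simp [mem_linSys, natCast_le_multAt_iff_eval_mderiv, φ, heval, hf, funext_iff, Sigma.forall]
  obtain ⟨P, hP0, hP⟩ := exists_ne_zero_forall_finrank_ker_le φ fun x => p₀ x.1 x.2
  refine ⟨P, hP0, fun p _ hp => ?_⟩
  have h := hP _ hp
  rwa [hφ p, hφ p₀, (Submodule.comapSubtypeEquivOfLe (linSys_le p d m)).finrank_eq,
    (Submodule.comapSubtypeEquivOfLe (linSys_le p₀ d m)).finrank_eq] at h

end Semicontinuity

section RestrictionToCurve

lemma exists_isHomogeneous_mul_eq {σ R : Type*} [CommSemiring R] {f F : MvPolynomial σ R} {d e : ℕ}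
    (hf : f.IsHomogeneous d) (hF : F.IsHomogeneous e) (hed : e ≤ d) (h : F ∣ f) :
    ∃ g : MvPolynomial σ R, g.IsHomogeneous (d - e) ∧ F * g = f := by
  let : GradedAlgebra (homogeneousSubmodule σ R) := gradedAlgebra
  obtain ⟨g, rfl⟩ := h
  refine ⟨_, (DirectSum.decompose (homogeneousSubmodule σ R) g (d - e)).2, ?_⟩
  rw [← DirectSum.coe_decompose_mul_of_left_mem_of_le (homogeneousSubmodule σ R) hF hed]
  exact DirectSum.decompose_of_mem_same (homogeneousSubmodule σ R) hf

lemma aeval_const_mul {σ R A : Type*} [CommSemiring R] [CommSemiring A] [Algebra R A]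
    {f : MvPolynomial σ R} {d : ℕ} (hf : f.IsHomogeneous d) (c : A) (ψ : σ → A) :
    aeval (fun i => c * ψ i) f = c ^ d * aeval ψ f := by
  simp only [aeval_def, eval₂_eq, Finset.mul_sum]
  refine Finset.sum_congr rfl fun ν hν => ?_
  rw [hf.degree_eq_sum_deg_support hν, ← Finset.prod_pow_eq_pow_sum]
  simp only [mul_pow, Finset.prod_mul_distrib]
  ring

lemma finrank_le_of_forall_dvd {K : Type*} [Field K] {S : Submodule K (Polynomial K)}
    {W : Polynomial K} (hW : W ≠ 0) {N : ℕ} (h : ∀ g ∈ S, W ∣ g ∧ g.natDegree ≤ N) :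
    Module.finrank K S ≤ N + 1 - W.natDegree := by
  have hle : S ≤ (Polynomial.degreeLT K (N + 1 - W.natDegree)).map (LinearMap.mulLeft K W) := by
    intro g hg
    obtain ⟨⟨q, rfl⟩, hdeg⟩ := h g hg
    refine ⟨q, ?_, rfl⟩
    rw [SetLike.mem_coe, Polynomial.mem_degreeLT]
    obtain rfl | hq := eq_or_ne q 0
    · rw [Polynomial.degree_zero]
      exact WithBot.bot_lt_coe _
    · rw [Polynomial.natDegree_mul hW hq] at hdeg
      rw [Polynomial.degree_eq_natDegree hq, Nat.cast_lt]
      omega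
  have hfin := (Polynomial.degreeLTEquiv K (N + 1 - W.natDegree)).symm.finiteDimensional
  have hrank := (Submodule.finrank_mono hle).trans (Submodule.finrank_map_le _ _)
  rwa [(Polynomial.degreeLTEquiv K _).finrank_eq, Module.finrank_fin_fun] at hrank

variable {n d e : ℕ} {p : Fin n → Fin 3 → ℂ} {m μ : Fin n → ℕ} {F f : MvPolynomial (Fin 3) ℂ}
  {ψ : Fin 3 → Polynomial ℂ} {s : Fin n → Polynomial ℂ}

lemma prod_pow_dvd_aeval_of_mem_linSys (hf : f ∈ linSys p d m)
    (hcop : Pairwise (Function.onFun IsCoprime s))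
    (hcontact : ∀ i, ∃ c : ℂ, c ≠ 0 ∧ ∀ j, s i ∣ Polynomial.C c * ψ j - Polynomial.C (p i j)) :
    ∏ i, s i ^ m i ∣ aeval ψ f := by
  rw [mem_linSys] at hf
  refine Finset.prod_dvd_of_coprime (fun i _ j _ hij => (hcop hij).pow) fun i _ => ?_
  obtain ⟨c, hc, h⟩ := hcontact i
  choose η hη using h
  have hdvd := pow_dvd_aeval_of_le_multAt (hf.2 i) (s i) η
  have harc : (fun j => algebraMap ℂ _ (p i j) + s i * η j) = fun j => Polynomial.C c * ψ j :=
    funext fun j => by rw [← hη, Polynomial.algebraMap_eq, add_sub_cancel]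
  rw [harc, aeval_const_mul hf.1] at hdvd
  exact ((Polynomial.isUnit_C.mpr hc.isUnit).pow d).dvd_mul_left.mp hdvd

lemma natCast_sub_le_multAt_of_mul {p : Fin 3 → ℂ} {a b : ℕ} {g : MvPolynomial (Fin 3) ℂ}
    (hF : multAt p F ≤ b) (h : a ≤ multAt p (F * g)) : ((a - b : ℕ) : ℕ∞) ≤ multAt p g := by
  rw [multAt_mul] at h
  rw [ENat.natCast_sub, tsub_le_iff_left]
  exact h.trans (by gcongr)

/-- Restriction of a linear system to a parametrized plane curve `F` of degree `e`. At the point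
`p i` the curve has multiplicity at most `μ i`, and the parametrization passes through the point
along the divisor of `s i`. -/
theorem finrank_linSys_le_of_curve (hF : F.IsHomogeneous e) (hed : e ≤ d)
    (hψ : ∀ j, (ψ j).natDegree ≤ e)
    (hdiv : ∀ f : MvPolynomial (Fin 3) ℂ, f.IsHomogeneous d → aeval ψ f = 0 → F ∣ f)
    (hmult : ∀ i, multAt (p i) F ≤ μ i) (hs : ∀ i, (s i).Monic) (hμ : ∀ i, (s i).natDegree = μ i)
    (hcop : Pairwise (Function.onFun IsCoprime s))
    (hcontact : ∀ i, ∃ c : ℂ, c ≠ 0 ∧ ∀ j, s i ∣ Polynomial.C c * ψ j - Polynomial.C (p i j)) :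
    Module.finrank ℂ (linSys p d m) ≤ (e * d + 1 - ∑ i, μ i * m i) +
      Module.finrank ℂ (linSys p (d - e) fun i => m i - μ i) := by
  let ρ : linSys p d m →ₗ[ℂ] Polynomial ℂ := (aeval ψ).toLinearMap ∘ₗ (linSys p d m).subtype
  have hW : (∏ i, s i ^ m i).Monic := Polynomial.monic_prod_of_monic _ _ fun i _ => (hs i).pow _
  have hWdeg : (∏ i, s i ^ m i).natDegree = ∑ i, μ i * m i := by
    rw [Polynomial.natDegree_prod_of_monic _ _ fun i _ => (hs i).pow _]
    exact Finset.sum_congr rfl fun i _ => by rw [(hs i).natDegree_pow, hμ, mul_comm]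
  have hrange : Module.finrank ℂ (LinearMap.range ρ) ≤ e * d + 1 - ∑ i, μ i * m i := by
    rw [← hWdeg]
    refine finrank_le_of_forall_dvd hW.ne_zero ?_
    rintro _ ⟨⟨f, hf⟩, rfl⟩
    exact ⟨prod_pow_dvd_aeval_of_mem_linSys hf hcop hcontact, mul_comm d e ▸
      aeval_natDegree_le f (mem_linSys.mp hf).1.totalDegree_le ψ hψ⟩
  have hker : (LinearMap.ker ρ).map (linSys p d m).subtype ≤
      (linSys p (d - e) fun i => m i - μ i).map (LinearMap.mulLeft ℂ F) := by
    rintro _ ⟨⟨f, hf⟩, h0, rfl⟩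
    rw [mem_linSys] at hf
    obtain ⟨g, hg, rfl⟩ := exists_isHomogeneous_mul_eq hf.1 hF hed (hdiv f hf.1 h0)
    exact ⟨g, mem_linSys.mpr ⟨hg, fun i => natCast_sub_le_multAt_of_mul (hmult i) (hf.2 i)⟩, rfl⟩
  have hkerrank := (Submodule.finrank_mono hker).trans (Submodule.finrank_map_le _ _)
  rw [Submodule.finrank_map_subtype_eq] at hkerrank
  have hrank := LinearMap.finrank_range_add_finrank_ker ρ
  omega

end RestrictionToCurve

section CuspCurve

/-- The plane curve `x₀ ^ (k + 1) = x₁ ^ k x₂`: a line, a conic and a cuspidal cubic for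
`k = 0, 1, 2`. -/
noncomputable def cuspCurve (K : Type*) [CommRing K] (k : ℕ) : MvPolynomial (Fin 3) K :=
  X 0 ^ (k + 1) - X 1 ^ k * X 2

/-- The parametrization `t ↦ (t ^ k, t ^ (k + 1), 1)` of `cuspCurve K k`, which misses only the
point `(0, 1, 0)`. -/
noncomputable def cuspParam (K : Type*) [CommRing K] (k : ℕ) : Fin 3 → Polynomial K :=
  ![Polynomial.X ^ k, Polynomial.X ^ (k + 1), 1]

/-- The multiplicity at the point `q` of the curve `x₀ ^ (k + 1) = x₁ ^ k x₂`, for `q` different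
from the point `(0, 1, 0)`. -/
def cuspMult {K : Type*} [Field K] [DecidableEq K] (k : ℕ) (q : Fin 3 → K) : ℕ :=
  if q 0 ^ (k + 1) = q 1 ^ k * q 2 then if q 1 = 0 then max 1 k else 1 else 0

lemma isHomogeneous_cuspCurve {K : Type*} [CommRing K] (k : ℕ) :
    (cuspCurve K k).IsHomogeneous (k + 1) :=
  (isHomogeneous_X_pow 0 (k + 1)).sub ((isHomogeneous_X_pow 1 k).mul (isHomogeneous_X K 2))

variable {K : Type*} [Field K] {k d : ℕ}

lemma pow_mul_aeval_cuspParam {L : Type*} [Field L] [Algebra K L] {a : L} (ha : a ≠ 0) (b : L) :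
    (fun i => a ^ (k + 1) * Polynomial.aeval (b / a) (cuspParam K k i)) =
      ![b ^ k * a, b ^ k * b, a ^ (k + 1)] := by
  ext i
  fin_cases i
  · simp [cuspParam, div_pow]
    field_simp
    ring
  · simp [cuspParam, div_pow]
    field_simp
    ring
  · simp [cuspParam]

lemma aeval_eq_zero_of_aeval_cuspParam {f : MvPolynomial (Fin 3) K} (hf : f.IsHomogeneous d)
    (h : aeval (cuspParam K k) f = 0) :
    aeval (![X 1 ^ k * X 0, X 1 ^ k * X 1, X 0 ^ (k + 1)] : Fin 3 → MvPolynomial (Fin 3) K) f =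
      0 := by
  let L := FractionRing (MvPolynomial (Fin 3) K)
  let x (i : Fin 3) : L := algebraMap (MvPolynomial (Fin 3) K) L (X i)
  have hx : x 0 ≠ 0 := by simp [x, X_ne_zero]
  have hfrac : algebraMap (MvPolynomial (Fin 3) K) L ∘
      ![X 1 ^ k * X 0, X 1 ^ k * X 1, X 0 ^ (k + 1)] =
      ![x 1 ^ k * x 0, x 1 ^ k * x 1, x 0 ^ (k + 1)] := by
    ext i
    fin_cases i <;> simp [x]
  refine FaithfulSMul.algebraMap_injective (MvPolynomial (Fin 3) K) L ?_
  rw [← aeval_algebraMap_apply, hfrac, ← pow_mul_aeval_cuspParam (K := K) hx, aeval_const_mul hf,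
    ← comp_aeval_apply, h, map_zero, mul_zero, map_zero]

lemma cuspCurve_dvd_of_aeval_cuspParam {f : MvPolynomial (Fin 3) K} (hf : f.IsHomogeneous d)
    (h : aeval (cuspParam K k) f = 0) : cuspCurve K k ∣ f := by
  have hdvd : cuspCurve K k ∣ (X 1 ^ k) ^ d * f := by
    let π := Ideal.Quotient.mkₐ K (Ideal.span {cuspCurve K k})
    have hπ : π (X 1 ^ k * X 2) = π (X 0 ^ (k + 1)) := by
      rw [eq_comm, ← sub_eq_zero, ← map_sub]
      exact Ideal.Quotient.eq_zero_iff_mem.mpr (Ideal.mem_span_singleton_self _)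
    have hscale : (fun i => π (X 1 ^ k * X i)) =
        fun i => π (![X 1 ^ k * X 0, X 1 ^ k * X 1, X 0 ^ (k + 1)] i) := by
      ext i
      fin_cases i
      · rfl
      · rfl
      · exact hπ
    have hzero : aeval (fun i => π (X 1 ^ k * X i)) f = 0 := by
      rw [hscale, ← comp_aeval_apply, aeval_eq_zero_of_aeval_cuspParam hf h, map_zero]
    simp only [map_mul] at hzero
    rw [aeval_const_mul hf, ← comp_aeval_apply, aeval_X_left, AlgHom.id_apply, ← map_pow,
      ← map_mul] at hzero
    exact Ideal.mem_span_singleton.mp (Ideal.Quotient.eq_zero_iff_mem.mp hzero)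
  have hX : ¬ (X 1 : MvPolynomial (Fin 3) K) ∣ cuspCurve K k := fun h => by
    simpa [cuspCurve] using map_dvd (eval ![1, 0, 0]) h
  obtain ⟨g, hg⟩ := hdvd
  rw [← pow_mul] at hg
  obtain ⟨g', rfl⟩ := (X_prime (R := K) (i := 1)).pow_dvd_of_dvd_mul_left _ hX (Dvd.intro _ hg)
  refine ⟨g', mul_left_cancel₀ (pow_ne_zero (k * d) (X_ne_zero 1)) ?_⟩
  rw [hg]
  ring

lemma multAt_le_degree_of_coeff_ne_zero {σ R : Type*} [CommSemiring R] {p : σ → R}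
    {f : MvPolynomial σ R} {ν : σ →₀ ℕ} (h : coeff ν (taylorShift p f) ≠ 0) :
    multAt p f ≤ ν.degree :=
  MvPowerSeries.order_le (by rwa [coeff_coe])

lemma multAt_le_one_of_eval_pderiv_ne_zero {σ R : Type*} [CommSemiring R] {p : σ → R}
    {f : MvPolynomial σ R} {i : σ} (h : eval p (pderiv i f) ≠ 0) : multAt p f ≤ 1 := by
  have hcoeff : coeff (Finsupp.single i 1) (taylorShift p f) ≠ 0 := by
    rw [← coeff_zero_taylorShift, ← pderiv_taylorShift, coeff_pderiv] at h
    simpa using h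
  simpa using multAt_le_degree_of_coeff_ne_zero hcoeff

lemma multAt_cuspCurve_le_of_eq_zero {q : Fin 3 → K} (h0 : q 0 = 0) (h1 : q 1 = 0) (h2 : q 2 ≠ 0) :
    multAt q (cuspCurve K k) ≤ k := by
  have hcoeff : coeff (Finsupp.single 1 k) (taylorShift q (cuspCurve K k)) ≠ 0 := by
    have h01 : Finsupp.single (0 : Fin 3) (k + 1) ≠ Finsupp.single 1 k := fun h => by
      simpa using DFunLike.congr_fun h 0
    have htaylor : taylorShift q (cuspCurve K k) =
        X 0 ^ (k + 1) - (C (q 2) * X 1 ^ k + X 2 * X 1 ^ k) := by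
      simp [cuspCurve, h0, h1]
      ring
    rw [htaylor, coeff_sub, coeff_add, coeff_C_mul, coeff_X_pow, coeff_X_pow, coeff_X_mul',
      if_neg h01, if_pos rfl, if_neg (by simp)]
    simpa using h2
  simpa using multAt_le_degree_of_coeff_ne_zero hcoeff

variable [DecidableEq K]

lemma cuspMult_ne_zero_iff {q : Fin 3 → K} : cuspMult k q ≠ 0 ↔ q 0 ^ (k + 1) = q 1 ^ k * q 2 := by
  rw [cuspMult]
  split_ifs with h <;> simp [h]

lemma multAt_cuspCurve_le {q : Fin 3 → K} (h : cuspMult k q ≠ 0 → q 2 ≠ 0) :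
    multAt q (cuspCurve K k) ≤ cuspMult k q := by
  rw [cuspMult_ne_zero_iff] at h
  rw [cuspMult]
  split_ifs with hq h1
  · obtain rfl | hk := eq_or_ne k 0
    · refine multAt_le_one_of_eval_pderiv_ne_zero (i := 2) ?_
      simp [cuspCurve]
    · rw [max_eq_right (Nat.one_le_iff_ne_zero.mpr hk)]
      have h0 : q 0 = 0 := by simpa [h1, hk] using hq
      exact multAt_cuspCurve_le_of_eq_zero h0 h1 (h hq)
  · refine multAt_le_one_of_eval_pderiv_ne_zero (i := 2) ?_
    simp [cuspCurve, h1]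
  · have hcoeff : coeff 0 (taylorShift q (cuspCurve K k)) ≠ 0 := by
      rw [coeff_zero_taylorShift]
      simpa [cuspCurve, sub_eq_zero] using hq
    simpa using multAt_le_degree_of_coeff_ne_zero hcoeff

/-- The points `q i` on `cuspCurve K k` are pairwise distinct and lie in the chart `x₂ ≠ 0` of the
parametrization `cuspParam K k`, in which `q` has the parameter `q 1 / q 0`. -/
def IsCuspPosition {n : ℕ} (k : ℕ) (q : Fin n → Fin 3 → K) : Prop :=
  (∀ i, cuspMult k (q i) ≠ 0 → q i 2 ≠ 0) ∧
    ∀ i j, i ≠ j → cuspMult k (q i) ≠ 0 → cuspMult k (q j) ≠ 0 → q i 1 / q i 0 ≠ q j 1 / q j 0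

lemma pow_dvd_cuspParam_sub {q : Fin 3 → K} (h : cuspMult k q ≠ 0) (h2 : q 2 ≠ 0) (j : Fin 3) :
    (Polynomial.X - Polynomial.C (q 1 / q 0)) ^ cuspMult k q ∣
      Polynomial.C (q 2) * cuspParam K k j - Polynomial.C (q j) := by
  have hq := cuspMult_ne_zero_iff.mp h
  rw [cuspMult, if_pos hq]
  split_ifs with h1
  · rw [h1, zero_div, Polynomial.C_0, sub_zero]
    obtain rfl | hk := eq_or_ne k 0
    · have h0 : q 0 = q 2 := by simpa using hq
      fin_cases j <;> simp [cuspParam, h0, h1]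
    · have h0 : q 0 = 0 := by simpa [h1, hk] using hq
      rw [max_eq_right (Nat.one_le_iff_ne_zero.mpr hk)]
      fin_cases j
      · simp [cuspParam, h0]
      · simpa [cuspParam, h1] using (pow_dvd_pow _ k.le_succ).mul_left _
      · simp [cuspParam]
  · have h0 : q 0 ≠ 0 := fun h0 => by simp [h0, h1, h2] at hq
    rw [pow_one, Polynomial.dvd_iff_isRoot, Polynomial.IsRoot.def]
    fin_cases j
    · simp [cuspParam, div_pow]
      field_simp
      linear_combination -hq
    · simp [cuspParam, div_pow]
      field_simp
      linear_combination (-q 1) * hq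
    · simp [cuspParam]

end CuspCurve

section RestrictionToCuspCurve

variable {n k d : ℕ} {p : Fin n → Fin 3 → ℂ}

theorem finrank_linSys_le_of_isCuspPosition (hk : k + 1 ≤ d) (hp : IsCuspPosition k p)
    (m : Fin n → ℕ) :
    Module.finrank ℂ (linSys p d m) ≤ ((k + 1) * d + 1 - ∑ i, cuspMult k (p i) * m i) +
      Module.finrank ℂ (linSys p (d - (k + 1)) fun i => m i - cuspMult k (p i)) := by
  obtain ⟨hchart, hdist⟩ := hp
  refine finrank_linSys_le_of_curve (F := cuspCurve ℂ k) (ψ := cuspParam ℂ k)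
    (s := fun i => (Polynomial.X - Polynomial.C (p i 1 / p i 0)) ^ cuspMult k (p i))
    (isHomogeneous_cuspCurve k) hk (fun j => ?_) (fun f => cuspCurve_dvd_of_aeval_cuspParam)
    (fun i => multAt_cuspCurve_le (hchart i)) (fun i => (Polynomial.monic_X_sub_C _).pow _)
    (fun i => ?_) (fun i j hij => ?_) fun i => ?_
  · fin_cases j <;> simp [cuspParam]
  · rw [(Polynomial.monic_X_sub_C _).natDegree_pow, Polynomial.natDegree_X_sub_C, mul_one]
  · obtain hi | hi := eq_or_ne (cuspMult k (p i)) 0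
    · simpa only [Function.onFun, hi, pow_zero] using isCoprime_one_left
    obtain hj | hj := eq_or_ne (cuspMult k (p j)) 0
    · simpa only [Function.onFun, hj, pow_zero] using isCoprime_one_right
    exact (Polynomial.isCoprime_X_sub_C_of_isUnit_sub
      (sub_ne_zero.mpr (hdist i j hij hi hj)).isUnit).pow
  · obtain hi | hi := eq_or_ne (cuspMult k (p i)) 0
    · exact ⟨1, one_ne_zero, fun j => by simp only [hi, pow_zero, one_dvd]⟩
    · exact ⟨p i 2, hchart i hi, pow_dvd_cuspParam_sub hi (hchart i hi)⟩

theorem finrank_linSys_le_of_isCuspPosition_mulVec {B : Matrix (Fin 3) (Fin 3) ℂ} (hk : k + 1 ≤ d)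
    (hB : B.det ≠ 0) (hp : IsCuspPosition k fun i => B *ᵥ p i) (m : Fin n → ℕ) :
    Module.finrank ℂ (linSys p d m) ≤ ((k + 1) * d + 1 - ∑ i, cuspMult k (B *ᵥ p i) * m i) +
      Module.finrank ℂ (linSys p (d - (k + 1)) fun i => m i - cuspMult k (B *ᵥ p i)) := by
  rw [← finrank_linSys_mulVec hB p d m, ← finrank_linSys_mulVec hB p (d - (k + 1))]
  exact finrank_linSys_le_of_isCuspPosition hk hp m

end RestrictionToCuspCurve

section CurveBound

section Map

variable {K L : Type*} [Field K] [Field L] [DecidableEq K] [DecidableEq L] (φ : K →+* L)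

lemma cuspMult_map (k : ℕ) (q : Fin 3 → K) : cuspMult k (φ ∘ q) = cuspMult k q := by
  simp only [cuspMult, Function.comp_apply, ← map_pow, ← map_mul, φ.injective.eq_iff, map_eq_zero]

lemma IsCuspPosition.map {n k : ℕ} {q : Fin n → Fin 3 → K} (h : IsCuspPosition k q) :
    IsCuspPosition k fun i => φ ∘ q i := by
  simp only [IsCuspPosition, cuspMult_map, Function.comp_apply, ← map_div₀, ne_eq,
    φ.injective.eq_iff, map_eq_zero]
  exact h

end Map

instance {K : Type*} [Field K] [DecidableEq K] {n k : ℕ} {q : Fin n → Fin 3 → K} :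
    Decidable (IsCuspPosition k q) := by
  unfold IsCuspPosition
  infer_instance

variable {n : ℕ}

/-- The upper bound for the dimension of the system of forms of degree `d` with multiplicities `m`
at the points `x`, obtained by restricting successively to the curves `cuspCurve k` in the
coordinates `B`, for the entries `(k, B)` of a list. If an entry is not applicable, or at the end of
the list, the bound is the number of monomials of degree `d`, except that a nonzero constant has no
positive multiplicity. -/
def curveBound (x : Fin n → Fin 3 → ℚ) :
    List (ℕ × Matrix (Fin 3) (Fin 3) ℚ) → ℕ → (Fin n → ℕ) → ℕ
  | [], d, m => if d = 0 ∧ ∃ i, 0 < m i then 0 else (d + 2).choose 2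
  | (k, B) :: l, d, m =>
    if k + 1 ≤ d ∧ B.det ≠ 0 ∧ IsCuspPosition k fun i => B *ᵥ x i then
      ((k + 1) * d + 1 - ∑ i, cuspMult k (B *ᵥ x i) * m i) +
        curveBound x l (d - (k + 1)) fun i => m i - cuspMult k (B *ᵥ x i)
    else (d + 2).choose 2

lemma finrank_linSys_le_choose (p : Fin n → Fin 3 → ℂ) (d : ℕ) (m : Fin n → ℕ) :
    Module.finrank ℂ (linSys p d m) ≤ (d + 2).choose 2 := by
  have h := Submodule.finrank_mono (linSys_le p d m)
  rwa [finrank_homogeneousSubmodule, Fintype.card_fin, show 3 + d - 1 = d + 2 by omega,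
    Nat.choose_symm_add] at h

lemma linSys_zero_eq_bot (p : Fin n → Fin 3 → ℂ) {m : Fin n → ℕ} {i : Fin n} (hi : 0 < m i) :
    linSys p 0 m = ⊥ := by
  rw [Submodule.eq_bot_iff]
  intro f hf
  obtain ⟨hhom, hmult⟩ := mem_linSys.mp hf
  rw [← totalDegree_zero_iff_isHomogeneous, totalDegree_eq_zero_iff_eq_C] at hhom
  have h := natCast_le_multAt_iff.mp (hmult i) 0 (by simpa using hi)
  rw [coeff_zero_taylorShift, hhom, eval_C] at h
  rw [hhom, h, C_0]

theorem finrank_linSys_le_curveBound (x : Fin n → Fin 3 → ℚ)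
    (l : List (ℕ × Matrix (Fin 3) (Fin 3) ℚ)) (d : ℕ) (m : Fin n → ℕ) :
    Module.finrank ℂ (linSys (fun i => algebraMap ℚ ℂ ∘ x i) d m) ≤ curveBound x l d m := by
  induction l generalizing d m with
  | nil =>
    rw [curveBound]
    split_ifs with h
    · obtain ⟨rfl, i, hi⟩ := h
      rw [linSys_zero_eq_bot _ hi, finrank_bot]
    · exact finrank_linSys_le_choose _ d m
  | cons a l ih =>
    obtain ⟨k, B⟩ := a
    rw [curveBound]
    split_ifs with h
    · obtain ⟨hk, hB, hx⟩ := h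
      have hdet : (B.map (algebraMap ℚ ℂ)).det ≠ 0 := by
        rw [← RingHom.mapMatrix_apply, ← RingHom.map_det]
        exact (map_ne_zero _).mpr hB
      have hmap (i : Fin n) :
          B.map (algebraMap ℚ ℂ) *ᵥ (algebraMap ℚ ℂ ∘ x i) = algebraMap ℚ ℂ ∘ (B *ᵥ x i) :=
        funext fun j => (RingHom.map_mulVec _ B (x i) j).symm
      have hmult (i : Fin n) : cuspMult k (B.map (algebraMap ℚ ℂ) *ᵥ (algebraMap ℚ ℂ ∘ x i)) =
          cuspMult k (B *ᵥ x i) := by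
        rw [hmap]
        exact cuspMult_map _ k _
      have hpos : IsCuspPosition k fun i =>
          B.map (algebraMap ℚ ℂ) *ᵥ (algebraMap ℚ ℂ ∘ x i) := by
        simpa only [hmap] using hx.map (algebraMap ℚ ℂ)
      refine ((finrank_linSys_le_of_isCuspPosition_mulVec hk hdet hpos m).trans
        (Nat.add_le_add_left (ih _ _) _)).trans_eq ?_
      simp only [hmult]
    · exact finrank_linSys_le_choose _ d m

theorem generically_projDim_eq (x : Fin n → Fin 3 → ℚ) (l : List (ℕ × Matrix (Fin 3) (Fin 3) ℚ))
    {d : ℕ} {m : Fin n → ℕ} {N : ℤ} (hN : curveBound x l d m ≤ N + 1)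
    (a d₁ d₂ : ℕ) (m₁ m₂ : Fin n → ℕ) (h₁ : 0 ≤ virtDim d₁ m₁) (h₂ : N ≤ virtDim d₂ m₂)
    (hd : a * d₁ + d₂ = d) (hm : ∀ i, m i ≤ a * m₁ i + m₂ i) :
    Generically n fun p => projDim p d m = N := by
  obtain ⟨P, hP0, hP⟩ := generically_finrank_linSys_le (fun i => algebraMap ℚ ℂ ∘ x i) d m
  refine ⟨P, hP0, fun p hp h => le_antisymm ?_ (h₂.trans (virtDim_le_projDim_of_fixed_part hp h₁
    hd hm))⟩
  have := (hP p hp h).trans (finrank_linSys_le_curveBound x l d m)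
  rw [projDim]
  omega

lemma Generically.special_of_projDim_eq {k d : ℕ} {m : Fin k → ℕ} {N v : ℤ}
    (h : Generically k fun p => projDim p d m = N) (hv : virtDim d m = v) (hN : max (-1) v < N) :
    virtDim d m = v ∧ Generically k fun p => projDim p d m = N ∧
      projDim p d m > max (-1) (virtDim d m) := by
  obtain ⟨P, hP0, hP⟩ := h
  refine ⟨hv, P, hP0, fun p hp hpP => ?_⟩
  have hdim : projDim p d m = N := hP p hp hpP
  exact ⟨hdim, by rwa [hv, hdim]⟩

end CurveBound

section SpecialSystems

/- Each `B` is a coordinate system in which a curve chosen through several of the points `x` (a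
line, a conic or, in the last system, also a cuspidal cubic) is `cuspCurve k`. The multiple fixed
part is the line through two sextuple points, the conic through the five points or through the five
sextuple points, the triangle of lines through three sextuple points, or a sextic with one triple
and seven double points. -/

lemma generically_projDim_linSys_nine_two :
    Generically 3 fun p => projDim p 9 (qh 2 0) = 15 :=
  generically_projDim_eq ![![1, 2, 3], ![1, 0, 0], ![0, 1, 0]]
    (List.replicate 6 (0, !![1, 1, 1; 1, 0, 0; 1, 1, 0]))
    (by decide +kernel) 3 1 6 ![0, 1, 1] ![0, 3, 3] (by decide) (by decide) rfl (by decide)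

lemma generically_projDim_linSys_ten_two :
    Generically 3 fun p => projDim p 10 (qh 2 1) = 23 :=
  generically_projDim_eq ![![1, 2, 3], ![1, 0, 0], ![0, 1, 0]]
    (([0, 0, 0, 0, 0, 1, 2] : List (Fin 3)).map ![
      (0, !![1, 1, 1; 1, 0, 0; 1, 1, 0]),
      (0, !![1, 3, -2; 0, 1, 0; 1, 0, 0]),
      (0, !![-3, 1, 1; 1, 0, 0; 0, 1, 0])])
    (by decide +kernel) 2 1 8 ![0, 1, 1] ![1, 4, 4] (by decide) (by decide) rfl (by decide)

lemma generically_projDim_linSys_twelve_four :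
    Generically 5 fun p => projDim p 12 (qh 4 3) = 3 :=
  generically_projDim_eq ![![1, 2, 3], ![1, 0, 0], ![0, 1, 0], ![0, 0, 1], ![1, 1, 1]]
    (([0, 1, 0, 1, 0, 1, 2, 0, 3, 0, 1, 2] : List (Fin 4)).map ![
      (0, !![1, 1, 1; 0, 1, 0; 0, 1, 1]),
      (0, !![1, -1, 1; 0, 1, 0; 1, 0, 0]),
      (0, !![1, 3, -2; 0, 1, 0; 1, 0, 0]),
      (0, !![0, 2, -1; 0, 1, 0; 1, 0, 0])])
    (by decide +kernel) 3 2 6 ![1, 1, 1, 1, 1] ![0, 3, 3, 3, 3]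
    (by decide) (by decide) rfl (by decide)

lemma generically_projDim_linSys_thirteen_four :
    Generically 5 fun p => projDim p 13 (qh 4 4) = 11 :=
  generically_projDim_eq ![![1, 2, 3], ![1, 0, 0], ![0, 1, 0], ![0, 0, 1], ![1, 1, 1]]
    (([0, 1, 0, 1, 2, 0, 3, 0, 1, 2, 0, 3, 0] : List (Fin 4)).map ![
      (0, !![1, 1, 1; 0, 1, 0; 0, 1, 1]),
      (0, !![1, -1, 1; 0, 1, 0; 1, 0, 0]),
      (0, !![1, 3, -2; 0, 1, 0; 1, 0, 0]),
      (0, !![0, 2, -1; 0, 1, 0; 1, 0, 0])])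
    (by decide +kernel) 2 2 9 ![1, 1, 1, 1, 1] ![2, 4, 4, 4, 4]
    (by decide) (by decide) rfl (by decide)

lemma generically_projDim_linSys_nine_three :
    Generically 4 fun p => projDim p 9 (qh 3 0) = 0 :=
  generically_projDim_eq ![![1, 2, 3], ![1, 0, 0], ![0, 1, 0], ![0, 0, 1]]
    (([0, 1, 2, 0, 1, 2, 0, 1, 2] : List (Fin 3)).map ![
      (0, !![1, 1, 1; 0, 1, 0; 0, 1, 1]),
      (0, !![1, 1, 1; 1, 0, 0; 1, 1, 0]),
      (0, !![1, -1, 1; 1, 0, 0; 1, 0, 1])])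
    (by decide +kernel) 3 3 0 ![0, 2, 2, 2] ![0, 0, 0, 0]
    (by decide) (by decide) rfl (by decide)

lemma generically_projDim_linSys_ten_three :
    Generically 4 fun p => projDim p 10 (qh 3 1) = 4 :=
  generically_projDim_eq ![![1, 2, 3], ![1, 0, 0], ![0, 1, 0], ![0, 0, 1]]
    (([0, 1, 2, 0, 1, 2, 0, 3, 0, 3] : List (Fin 4)).map ![
      (0, !![1, 1, 1; 0, 1, 0; 0, 1, 1]),
      (0, !![1, 1, 1; 1, 0, 0; 1, 1, 0]),
      (0, !![1, -1, 1; 1, 0, 0; 1, 0, 1]),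
      (0, !![1, 3, -2; 0, 1, 0; 1, 0, 0])])
    (by decide +kernel) 2 3 4 ![0, 2, 2, 2] ![1, 2, 2, 2]
    (by decide) (by decide) rfl (by decide)

lemma generically_projDim_linSys_fourteen_five :
    Generically 6 fun p => projDim p 14 (qh 5 5) = 0 :=
  generically_projDim_eq
    ![![1, 1, 1], ![1, 0, 0], ![0, 1, 0], ![0, 0, 1], ![1, 2, 3], ![1, 3, 2]]
    (([0, 1, 2, 3, 4, 5, 0] : List (Fin 6)).map ![
      (1, !![6, 0, 5; -6, 0, 5; -6, 20, 5]),
      (1, !![-2, -1, 0; 4, -1, 0; 1, -1, 3]),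
      (1, !![-2, 0, -1; -4, 0, 1; -1, -3, 1]),
      (1, !![15, -6, -1; -5, -2, 3; -45, -18, 47]),
      (1, !![15, -1, -6; 5, -3, 2; 45, -47, 18]),
      (1, !![7, 0, -3; -5, 0, 3; -14, 3, 3])])
    (by decide +kernel) 2 2 10 ![0, 1, 1, 1, 1, 1] ![5, 4, 4, 4, 4, 4]
    (by decide) (by decide) rfl (by decide)

lemma generically_projDim_linSys_eighteen_seven :
    Generically 8 fun p => projDim p 18 (qh 7 9) = 0 :=
  generically_projDim_eq
    ![![0, 0, 1], ![2, 1, 8], ![4, -8, 1], ![2, -1, 8], ![1, 1, 1], ![4, 8, 1], ![9, 27, 1],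
      ![2, 1, 0]]
    (([0, 1, 2, 0, 1, 2, 0, 1, 2] : List (Fin 3)).map ![
      (0, !![0, 2, 1; 1, 0, 0; 1, 0, 1]),
      (1, !![288, -246, 816; -591, 192, 828; -369, 628, 1457]),
      (2, 1)])
    (by decide +kernel) 3 6 0 ![3, 2, 2, 2, 2, 2, 2, 2] ![0, 0, 0, 0, 0, 0, 0, 0]
    (by decide) (by decide) rfl (by decide)

end SpecialSystems

theorem special_L_3e_families_and_sporadic :
    (∀ e : ℕ, 1 ≤ e → e ≤ 2 →
      virtDim (3 * e + 6) (qh (2 * e) (3 * e - 3)) = -12 * (e : ℤ) + 24 ∧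
      Generically (2 * e + 1) (fun p =>
        projDim p (3 * e + 6) (qh (2 * e) (3 * e - 3)) = 27 - 12 * (e : ℤ) ∧
        projDim p (3 * e + 6) (qh (2 * e) (3 * e - 3)) >
          max (-1) (virtDim (3 * e + 6) (qh (2 * e) (3 * e - 3))))) ∧
    (∀ e : ℕ, 1 ≤ e → e ≤ 2 →
      virtDim (3 * e + 7) (qh (2 * e) (3 * e - 2)) = -12 * (e : ℤ) + 34 ∧
      Generically (2 * e + 1) (fun p =>
        projDim p (3 * e + 7) (qh (2 * e) (3 * e - 2)) = 35 - 12 * (e : ℤ) ∧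
        projDim p (3 * e + 7) (qh (2 * e) (3 * e - 2)) >
          max (-1) (virtDim (3 * e + 7) (qh (2 * e) (3 * e - 2))))) ∧
    (virtDim 9 (qh 3 0) = -9 ∧
      Generically 4 (fun p =>
        projDim p 9 (qh 3 0) = 0 ∧
        projDim p 9 (qh 3 0) > max (-1) (virtDim 9 (qh 3 0)))) ∧
    (virtDim 10 (qh 3 1) = 1 ∧
      Generically 4 (fun p =>
        projDim p 10 (qh 3 1) = 4 ∧
        projDim p 10 (qh 3 1) > max (-1) (virtDim 10 (qh 3 1)))) ∧
    (virtDim 14 (qh 5 5) = -1 ∧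
      Generically 6 (fun p =>
        projDim p 14 (qh 5 5) = 0 ∧
        projDim p 14 (qh 5 5) > max (-1) (virtDim 14 (qh 5 5)))) ∧
    (virtDim 18 (qh 7 9) = -3 ∧
      Generically 8 (fun p =>
        projDim p 18 (qh 7 9) = 0 ∧
        projDim p 18 (qh 7 9) > max (-1) (virtDim 18 (qh 7 9)))) := by
  refine ⟨fun e h₁ h₂ => ?_, fun e h₁ h₂ => ?_, ?_, ?_, ?_, ?_⟩
  · interval_cases e
    · exact generically_projDim_linSys_nine_two.special_of_projDim_eq (by decide) (by decide)
    · exact generically_projDim_linSys_twelve_four.special_of_projDim_eq (by decide) (by decide)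
  · interval_cases e
    · exact generically_projDim_linSys_ten_two.special_of_projDim_eq (by decide) (by decide)
    · exact generically_projDim_linSys_thirteen_four.special_of_projDim_eq (by decide) (by decide)
  · exact generically_projDim_linSys_nine_three.special_of_projDim_eq (by decide) (by decide)
  · exact generically_projDim_linSys_ten_three.special_of_projDim_eq (by decide) (by decide)
  · exact generically_projDim_linSys_fourteen_five.special_of_projDim_eq (by decide) (by decide)
  · exact generically_projDim_linSys_eighteen_seven.special_of_projDim_eq (by decide) (by decide)
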